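/- Let G be a distance-regular graph of diameter 3 with intersection array {k, b₁, b₂; 1, c₂, c₃} and let q ≠ 0 be a real number. Then the matrix identity c₂q²·𝔻_q = c₂(q²+q+1)·J − ((q²+q+1)c₂ − k)·I − ((q+1)c₂ − a₁)·A − A² holds. -/

import Mathlib

/-!
Since `q^(D-1) (1 + 1/q + ⋯ + 1/q^(i-1)) = [D] - [D-i]` with `[m] = 1 + q + ⋯ + q^(m-1)`, a
connected graph of diameter at most `D` satisfies
`q^(D-1) 𝔻_q = [D] (J - I) - ∑_{1 ≤ i < D} [D-i] A_i`. For `D = 3` the right-hand side is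
`(q² + q + 1)(J - I) - (q + 1) A - A₂`, and multiplying by `c₂` lets one eliminate `A₂` through the
three-term recurrence `A² = k I + a₁ A + c₂ A₂`.
-/

open Matrix

variable {V : Type*} [Fintype V] [DecidableEq V]

/-- The distance-`i` matrix of a graph: the `(x,y)` entry is 1 if `dist x y = i`, else 0. -/
noncomputable def distM (G : SimpleGraph V) (i : ℕ) : Matrix V V ℝ :=
  Matrix.of fun x y => if G.dist x y = i then (1 : ℝ) else 0

/-- The `q`-distance matrix `𝔻_q = ∑_{i=1}^D (1 + 1/q + ⋯ + 1/q^{i-1}) • A_i`. -/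
noncomputable def qDist (G : SimpleGraph V) (D : ℕ) (q : ℝ) : Matrix V V ℝ :=
  ∑ i ∈ Finset.Icc 1 D, (∑ j ∈ Finset.range i, (1 / q) ^ j) • distM G i

/-- `G` is distance-regular with diameter `D` and intersection numbers `b i`, `c i`
(with `c 1 = 1`): for any vertices `x, y` at distance `i ≤ D`, the number of neighbors
of `y` at distance `i - 1` from `x` is `c i` and the number of neighbors of `y` at
distance `i + 1` from `x` is `b i`. -/
def IsDRG (G : SimpleGraph V) (D : ℕ) (b c : ℕ → ℕ) : Prop :=
  G.Connected ∧
  (∀ x y : V, G.dist x y ≤ D) ∧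
  (∃ x y : V, G.dist x y = D) ∧
  c 1 = 1 ∧
  ∀ i ≤ D, ∀ x y : V, G.dist x y = i →
    ({z : V | G.Adj y z ∧ G.dist x z = i - 1} : Set V).ncard = c i ∧
    ({z : V | G.Adj y z ∧ G.dist x z = i + 1} : Set V).ncard = b i

/-- `a i = k - b i - c i` as a real number, where `k = b 0`. -/
noncomputable def aInt (b c : ℕ → ℕ) (i : ℕ) : ℝ := (b 0 : ℝ) - (b i : ℝ) - (c i : ℝ)

theorem pow_mul_geom_sum_one_div {K : Type*} [Field K] {q : K} (hq : q ≠ 0) {n i : ℕ}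
    (hi : i ≤ n + 1) :
    q ^ n * ∑ j ∈ Finset.range i, (1 / q) ^ j =
      ∑ j ∈ Finset.range (n + 1), q ^ j - ∑ j ∈ Finset.range (n + 1 - i), q ^ j := by
  induction i with
  | zero => simp
  | succ i ih =>
    have hin : i ≤ n := Nat.le_of_succ_le_succ hi
    have hpow : q ^ n * (1 / q) ^ i = q ^ (n - i) := by
      rw [one_div, inv_pow, pow_sub₀ q hq hin]
    rw [Finset.sum_range_succ, mul_add, ih (hin.trans n.le_succ), hpow, Nat.add_sub_add_right,
      Nat.sub_add_comm hin, Finset.sum_range_succ _ (n - i)]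
    ring

section DistanceMatrix

omit [Fintype V]

variable {G : SimpleGraph V} {n : ℕ}

omit [DecidableEq V] in
theorem distM_eq_zero_of_lt (hn : ∀ x y, G.dist x y ≤ n) {i : ℕ} (hi : n < i) :
    distM G i = 0 := by
  ext x y
  exact if_neg ((hn x y).trans_lt hi).ne

theorem distM_zero (hG : G.Connected) : distM G 0 = 1 := by
  ext x y
  simp only [distM, of_apply, one_apply, hG.dist_eq_zero_iff]

omit [DecidableEq V] in
theorem sum_range_distM (hn : ∀ x y, G.dist x y ≤ n) :
    ∑ i ∈ Finset.range (n + 1), distM G i = of fun _ _ ↦ 1 := by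
  ext x y
  simp [Matrix.sum_apply, distM, hn x y]

theorem sum_Icc_distM (hG : G.Connected) (hn : ∀ x y, G.dist x y ≤ n) :
    ∑ i ∈ Finset.Icc 1 n, distM G i = (of fun _ _ ↦ 1) - 1 := by
  rw [← sum_range_distM hn, ← distM_zero hG, Finset.sum_range_eq_add_Ico _ n.succ_pos,
    add_sub_cancel_left, Nat.succ_eq_add_one, Finset.Ico_add_one_right_eq_Icc]

omit [DecidableEq V] in
theorem qDist_eq_of_le (hn : ∀ x y, G.dist x y ≤ n) {m : ℕ} (hnm : n ≤ m) (q : ℝ) :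
    qDist G n q = qDist G m q := by
  refine Finset.sum_subset (Finset.Icc_subset_Icc_right hnm) fun i him hin ↦ ?_
  have hi : n < i := not_le.mp fun h ↦ hin (Finset.mem_Icc.mpr ⟨(Finset.mem_Icc.mp him).1, h⟩)
  rw [distM_eq_zero_of_lt hn hi, smul_zero]

theorem pow_smul_qDist (hG : G.Connected) (hn : ∀ x y, G.dist x y ≤ n + 1) {q : ℝ}
    (hq : q ≠ 0) :
    q ^ n • qDist G (n + 1) q =
      (∑ j ∈ Finset.range (n + 1), q ^ j) • ((of fun _ _ ↦ 1) - 1) -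
        ∑ i ∈ Finset.Icc 1 n, (∑ j ∈ Finset.range (n + 1 - i), q ^ j) • distM G i := by
  have hcoeff : ∀ i ∈ Finset.Icc 1 (n + 1),
      q ^ n • (∑ j ∈ Finset.range i, (1 / q) ^ j) • distM G i =
        (∑ j ∈ Finset.range (n + 1), q ^ j) • distM G i -
          (∑ j ∈ Finset.range (n + 1 - i), q ^ j) • distM G i := fun i hi ↦ by
    rw [smul_smul, pow_mul_geom_sum_one_div hq (Finset.mem_Icc.mp hi).2, sub_smul]
  rw [qDist, Finset.smul_sum, Finset.sum_congr rfl hcoeff, Finset.sum_sub_distrib,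
    ← Finset.smul_sum, sum_Icc_distM hG hn, Finset.sum_Icc_succ_top n.succ_pos]
  simp

theorem sq_smul_qDist_three (hG : G.Connected) (h3 : ∀ x y, G.dist x y ≤ 3) {q : ℝ}
    (hq : q ≠ 0) :
    q ^ 2 • qDist G 3 q =
      (q ^ 2 + q + 1) • ((of fun _ _ ↦ 1) - 1) - (q + 1) • distM G 1 - distM G 2 := by
  rw [pow_smul_qDist hG h3 hq, Finset.sum_Icc_succ_top one_le_two, Finset.Icc_self]
  simp only [Finset.sum_singleton, Finset.sum_range_succ, Finset.sum_range_zero, Nat.reduceAdd,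
    Nat.reduceSub]
  module

end DistanceMatrix

section IntersectionNumbers

omit [Fintype V] [DecidableEq V]

variable {G : SimpleGraph V} {x y : V} {i : ℕ}

theorem ncard_adj_eq_add [Finite V] (hxy : G.dist x y = i + 1) :
    {z | G.Adj y z}.ncard = {z | G.Adj y z ∧ G.dist x z = i}.ncard +
      {z | G.Adj y z ∧ G.dist x z = i + 1}.ncard +
      {z | G.Adj y z ∧ G.dist x z = i + 2}.ncard := by
  have hunion : {z | G.Adj y z} = {z | G.Adj y z ∧ G.dist x z = i} ∪
      {z | G.Adj y z ∧ G.dist x z = i + 1} ∪ {z | G.Adj y z ∧ G.dist x z = i + 2} := by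
    ext z
    have hz : G.Adj y z → G.dist x z = i ∨ G.dist x z = i + 1 ∨ G.dist x z = i + 2 := fun h ↦ by
      have := h.diff_dist_adj (u := x)
      lia
    simp only [Set.mem_union, Set.mem_ofPred_eq]
    tauto
  rw [hunion, Set.ncard_union_eq, Set.ncard_union_eq]
  all_goals
    rw [Set.disjoint_left]
    simp only [Set.mem_union, Set.mem_ofPred_eq]
    lia

namespace IsDRG

variable {D : ℕ} {b c : ℕ → ℕ}

theorem connected (hG : IsDRG G D b c) : G.Connected := hG.1

theorem dist_le (hG : IsDRG G D b c) (x y : V) : G.dist x y ≤ D := hG.2.1 x y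

theorem ncard_adj_dist_succ (hG : IsDRG G D b c) (hxy : G.dist x y = i) :
    {z | G.Adj y z ∧ G.dist x z = i + 1}.ncard = b i :=
  (hG.2.2.2.2 i (hxy ▸ hG.dist_le x y) x y hxy).2

theorem ncard_adj_dist_pred (hG : IsDRG G D b c) (hxy : G.dist x y = i + 1) :
    {z | G.Adj y z ∧ G.dist x z = i}.ncard = c (i + 1) :=
  (hG.2.2.2.2 (i + 1) (hxy ▸ hG.dist_le x y) x y hxy).1

theorem ncard_adj (hG : IsDRG G D b c) (y : V) : {z | G.Adj y z}.ncard = b 0 := by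
  rw [← hG.ncard_adj_dist_succ (SimpleGraph.dist_self (v := y))]
  simp only [zero_add, SimpleGraph.dist_eq_one_iff_adj, and_self]

theorem ncard_adj_dist_self [Finite V] (hG : IsDRG G D b c) (hxy : G.dist x y = i + 1) :
    ({z | G.Adj y z ∧ G.dist x z = i + 1}.ncard : ℝ) = aInt b c (i + 1) := by
  have hdeg := ncard_adj_eq_add hxy
  rw [hG.ncard_adj, hG.ncard_adj_dist_pred hxy, hG.ncard_adj_dist_succ hxy] at hdeg
  rw [aInt, hdeg]
  push_cast
  ring

end IsDRG

end IntersectionNumbers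

section ThreeTermRecurrence

variable {G : SimpleGraph V} {D : ℕ} {b c : ℕ → ℕ}

omit [DecidableEq V] in
theorem distM_mul_distM_one_apply (G : SimpleGraph V) (i : ℕ) (x y : V) :
    (distM G i * distM G 1) x y = ({z : V | G.Adj y z ∧ G.dist x z = i}.ncard : ℝ) := by
  classical
  simp only [mul_apply, distM, of_apply, SimpleGraph.dist_eq_one_iff_adj, G.adj_comm _ y,
    Set.ncard_eq_toFinset_card', Set.toFinset_ofPred, mul_ite, mul_one, mul_zero, ← ite_and,
    Finset.sum_boole]

omit [DecidableEq V] in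
theorem IsDRG.distM_succ_mul_distM_one (hG : IsDRG G D b c) (i : ℕ) :
    distM G (i + 1) * distM G 1 =
      (b i : ℝ) • distM G i + aInt b c (i + 1) • distM G (i + 1) +
        (c (i + 2) : ℝ) • distM G (i + 2) := by
  ext x y
  rw [distM_mul_distM_one_apply]
  simp only [Matrix.add_apply, Matrix.smul_apply, distM, of_apply, smul_eq_mul]
  obtain hi | hi | hi | hfar : G.dist x y = i ∨ G.dist x y = i + 1 ∨ G.dist x y = i + 2 ∨
      (G.dist x y ≠ i ∧ G.dist x y ≠ i + 1 ∧ G.dist x y ≠ i + 2) := by tauto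
  · simp [hi, hG.ncard_adj_dist_succ hi]
  · simp [hi, hG.ncard_adj_dist_self hi]
  · simp [hi, hG.ncard_adj_dist_pred hi]
  · have hempty : {z | G.Adj y z ∧ G.dist x z = i + 1} = ∅ := by
      refine Set.eq_empty_of_forall_notMem fun z ⟨hyz, hxz⟩ ↦ ?_
      have := hyz.symm.diff_dist_adj (u := x)
      lia
    simp [hempty, hfar]

theorem IsDRG.distM_one_mul_self (hG : IsDRG G D b c) :
    distM G 1 * distM G 1 =
      (b 0 : ℝ) • 1 + aInt b c 1 • distM G 1 + (c 2 : ℝ) • distM G 2 := by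
  rw [← distM_zero hG.connected]
  exact hG.distM_succ_mul_distM_one 0

end ThreeTermRecurrence

theorem stmt2_general {G : SimpleGraph V} {D : ℕ} {b c : ℕ → ℕ} (hG : IsDRG G D b c)
    (hD : D ≤ 3) {q : ℝ} (hq : q ≠ 0) :
    ((c 2 : ℝ) * q ^ 2) • qDist G D q =
      (((c 2 : ℝ) * (q ^ 2 + q + 1)) • (Matrix.of fun _ _ => (1 : ℝ) : Matrix V V ℝ))
      - (((q ^ 2 + q + 1) * (c 2 : ℝ) - (b 0 : ℝ)) • (1 : Matrix V V ℝ))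
      - (((q + 1) * (c 2 : ℝ) - aInt b c 1) • distM G 1)
      - distM G 1 * distM G 1 := by
  have hdist : ∀ x y, G.dist x y ≤ 3 := fun x y ↦ (hG.dist_le x y).trans hD
  rw [qDist_eq_of_le hG.dist_le hD, mul_smul, sq_smul_qDist_three hG.connected hdist hq,
    hG.distM_one_mul_self]
  module

/-- Proposition 3.2, matrix identity: for a distance-regular graph of
diameter 3 with intersection array `{k, b₁, b₂; 1, c₂, c₃}` and `q ≠ 0`,
`c₂q² • 𝔻_q = c₂(q²+q+1) • J − ((q²+q+1)c₂ − k) • I − ((q+1)c₂ − a₁) • A − A²`. -/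
theorem stmt2 (G : SimpleGraph V) (b c : ℕ → ℕ) (hG : IsDRG G 3 b c)
    (q : ℝ) (hq : q ≠ 0) :
    ((c 2 : ℝ) * q ^ 2) • qDist G 3 q =
      (((c 2 : ℝ) * (q ^ 2 + q + 1)) • (Matrix.of fun _ _ => (1 : ℝ) : Matrix V V ℝ))
      - (((q ^ 2 + q + 1) * (c 2 : ℝ) - (b 0 : ℝ)) • (1 : Matrix V V ℝ))
      - (((q + 1) * (c 2 : ℝ) - aInt b c 1) • distM G 1)
      - distM G 1 * distM G 1 :=
  stmt2_general hG le_rfl hq
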